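/- Let A and B be finite groups with Z(B) ≤ A ≤ B and B/A cyclic. If every irreducible complex character of A is invariant under conjugation by B, then Z(A) = Z(B). In particular, if A ≠ B, then A is nonabelian. -/

import Mathlib

/-! On an irreducible representation of `A` of degree `d`, a central element `z` acts as the scalar
`χ(z) / d`, which makes sense because `d` is invertible in the field. Since `k[A]` is semisimple,
an element of it acting as zero on all simple modules vanishes; hence irreducible characters
separate the points of `Z(A)`. If these characters are `B`-invariant, then `z ∈ Z(A)` and its
`B`-conjugates, which again lie in `Z(A)`, have the same character values and so coincide:
`z ∈ Z(B)`. If moreover `A` is abelian, then `A = Z(A) = Z(B)`, so that `B / Z(B)` is cyclic and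
`B` is abelian, that is, `B = Z(B) = A`. -/

open CategoryTheory Representation
open scoped MonoidAlgebra

universe u v w

section Groups

variable {B : Type*} [Group B] {A : Subgroup B}

theorem centralizer_inf_self_eq_map_center (A : Subgroup B) :
    Subgroup.centralizer (A : Set B) ⊓ A = (Subgroup.center A).map A.subtype := by
  ext z
  simp [Subgroup.mem_centralizer_iff, Subgroup.mem_center_iff, Subtype.ext_iff, and_comm]

theorem map_center_eq_center_of_conj_eq_self (hZ : Subgroup.center B ≤ A)
    (hfix : ∀ z ∈ Subgroup.center A, ∀ b : B, b⁻¹ * z * b = z) :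
    (Subgroup.center A).map A.subtype = Subgroup.center B := by
  apply le_antisymm
  · rintro _ ⟨z, hz, rfl⟩
    refine Subgroup.mem_center_iff.mpr fun b ↦ ?_
    rw [A.subtype_apply, eq_comm, ← inv_mul_eq_iff_eq_mul, ← mul_assoc, hfix z hz b]
  · rw [← centralizer_inf_self_eq_map_center]
    exact le_inf (Subgroup.center_le_centralizer _) hZ

theorem center_eq_top_of_le_center_of_isCyclic_quotient [A.Normal] [IsCyclic (B ⧸ A)]
    (hA : A ≤ Subgroup.center B) : Subgroup.center B = ⊤ :=
  Subgroup.center_eq_top_iff.mpr <|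
    (QuotientGroup.mk' A).isMulCommutative_of_isCyclic_of_ker_le_center <| by
      rwa [QuotientGroup.ker_mk']

end Groups

theorem eq_of_forall_isSimpleModule_smul_eq {R : Type u} [Ring R] [IsSemisimpleRing R] {a b : R}
    (h : ∀ (M : Type u) [AddCommGroup M] [Module R M] [IsSimpleModule R M] (m : M),
      a • m = b • m) : a = b := by
  suffices a - b ∈ Ring.jacobson R by
    rwa [IsSemisimpleRing.jacobson_eq_bot, Submodule.mem_bot, sub_eq_zero] at this
  rw [Ring.jacobson_eq_sInf_isMaximal, Submodule.mem_sInf]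
  intro I hI
  have : IsSimpleModule R (R ⧸ I) :=
    isSimpleModule_iff_quot_maximal.mpr ⟨I, hI, ⟨LinearEquiv.refl R _⟩⟩
  have hab := h (R ⧸ I) (Submodule.Quotient.mk 1)
  rw [← Submodule.Quotient.mk_smul, ← Submodule.Quotient.mk_smul, Submodule.Quotient.eq] at hab
  simpa only [smul_eq_mul, mul_one] using hab

section Irreducible

variable {k G V W : Type*} [Field k] [AddCommGroup V] [Module k V] [AddCommGroup W] [Module k W]

theorem nontrivial_of_isIrreducible [Monoid G] (ρ : Representation k G V) [IsIrreducible ρ] :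
    Nontrivial V :=
  IsSimpleModule.nontrivial k[G] ρ.asModule

theorem isIrreducible_of_equiv [Monoid G] {ρ : Representation k G V} {σ : Representation k G W}
    (e : ρ.Equiv σ) [IsIrreducible ρ] : IsIrreducible σ := by
  let f : ρ.asModule ≃ₗ[k[G]] σ.asModule :=
    .ofBijective (IntertwiningMap.equivLinearMapAsModule ρ σ e.toIntertwiningMap)
      e.toLinearEquiv.bijective
  rw [irreducible_iff_isSimpleModule_asModule]
  exact .congr f.symm

theorem isIrreducible_ofModule' [Monoid G] (M : Type*) [AddCommGroup M] [Module k M]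
    [Module k[G] M] [IsScalarTower k k[G] M] [IsSimpleModule k[G] M] :
    (ofModule' M : Representation k G M).IsIrreducible := by
  let ρ : Representation k G M := ofModule' M
  have hρ : ρ.asAlgebraHom = Algebra.lsmul k k M := Equiv.apply_symm_apply _ _
  let e : ρ.asModule ≃ₗ[k[G]] M :=
    ρ.asModuleEquiv.toAddEquiv.toLinearEquiv fun r m ↦ by
      simp [ρ.asModuleEquiv_map_smul, hρ]
  rw [irreducible_iff_isSimpleModule_asModule]
  exact .congr e

variable [FiniteDimensional k V]

theorem exists_intertwiningMap_eq_smul_one [IsAlgClosed k] [Monoid G] {ρ : Representation k G V}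
    [IsIrreducible ρ] (f : IntertwiningMap ρ ρ) : ∃ c : k, f.toLinearMap = c • 1 := by
  obtain ⟨c, hc⟩ :=
    IsIrreducible.algebraMap_intertwiningMap_bijective_of_isAlgClosed.surjective f
  exact ⟨c, congrArg IntertwiningMap.toLinearMap hc.symm⟩

theorem trace_linHom_apply [Group G] (ρ : Representation k G V) (g : G) (f : Module.End k V) :
    LinearMap.trace k V (linHom ρ ρ g f) = LinearMap.trace k V f := by
  rw [linHom_apply, ← LinearMap.comp_assoc, LinearMap.trace_comp_comm', ← Module.End.mul_eq_comp,
    ← Module.End.mul_eq_comp, ← mul_assoc, ← map_mul, inv_mul_cancel, map_one, one_mul]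

theorem trace_norm_linHom_apply [Group G] [Fintype G] (ρ : Representation k G V)
    (f : Module.End k V) :
    LinearMap.trace k V ((linHom ρ ρ).norm f) = Nat.card G * LinearMap.trace k V f := by
  simp only [Representation.norm, LinearMap.sum_apply, map_sum, trace_linHom_apply,
    Finset.sum_const, Finset.card_univ, nsmul_eq_mul, Nat.card_eq_fintype_card]

theorem finrank_ne_zero_of_isIrreducible [IsAlgClosed k] [Group G] [Finite G]
    [NeZero (Nat.card G : k)] (ρ : Representation k G V) [IsIrreducible ρ] :
    (Module.finrank k V : k) ≠ 0 := by
  have := Fintype.ofFinite G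
  have := nontrivial_of_isIrreducible ρ
  obtain ⟨v, hv⟩ := exists_ne (0 : V)
  obtain ⟨φ, hφ⟩ := Module.Projective.exists_dual_eq_one k hv
  -- Averaging an endomorphism of trace `1` over `G` gives a scalar `c` with `c * dim V = |G|`.
  let f : Module.End k V := φ.smulRight v
  have hf : (linHom ρ ρ).norm f ∈ (linHom ρ ρ).invariants := fun g ↦ self_norm_apply _ g f
  obtain ⟨c, hc⟩ := exists_intertwiningMap_eq_smul_one
    (invariantsEquivIntertwiningMap ρ ρ ⟨_, hf⟩)
  have htr : c * Module.finrank k V = Nat.card G := calc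
    c * Module.finrank k V = LinearMap.trace k V (c • 1) := by
      rw [map_smul, LinearMap.trace_one, smul_eq_mul]
    _ = LinearMap.trace k V ((linHom ρ ρ).norm f) := congrArg _ hc.symm
    _ = Nat.card G := by rw [trace_norm_linHom_apply, LinearMap.trace_smulRight, hφ, mul_one]
  exact right_ne_zero_of_mul (htr ▸ NeZero.ne (Nat.card G : k))

theorem eq_of_mem_center_of_character_eq [IsAlgClosed k] [Group G] [Finite G]
    [NeZero (Nat.card G : k)] (ρ : Representation k G V) [IsIrreducible ρ] {z w : G}
    (hz : z ∈ Subgroup.center G) (hw : w ∈ Subgroup.center G)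
    (h : ρ.character z = ρ.character w) : ρ z = ρ w := by
  obtain ⟨c, hc : ρ z = c • 1⟩ :=
    exists_intertwiningMap_eq_smul_one (IntertwiningMap.centralMul ρ z hz)
  obtain ⟨d, hd : ρ w = d • 1⟩ :=
    exists_intertwiningMap_eq_smul_one (IntertwiningMap.centralMul ρ w hw)
  rw [character, character, hc, hd, map_smul, map_smul, LinearMap.trace_one] at h
  rw [hc, hd, smul_left_injective k (finrank_ne_zero_of_isIrreducible ρ) h]

end Irreducible

section Simple

variable {k : Type u} {G : Type v} [Field k]

theorem simple_of_isIrreducible [Monoid G] {V : Type u} [AddCommGroup V] [Module k V]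
    [FiniteDimensional k V] (ρ : Representation k G V) [IsIrreducible ρ] :
    Simple (FDRep.of ρ) := by
  have : Simple (Rep.equivalenceModuleMonoidAlgebra.functor.obj (Rep.of ρ)) :=
    inferInstanceAs (Simple (ModuleCat.of k[G] ρ.asModule))
  have : Simple ((forget₂ (FDRep k G) (Rep k G)).obj (FDRep.of ρ)) :=
    (simple_obj_iff Rep.equivalenceModuleMonoidAlgebra.functor (Rep.of ρ)).mp this
  exact (forget₂ (FDRep k G) (Rep k G)).simple_of_simple_obj _

theorem exists_simple_character_eq [Monoid G] {V : Type w} [AddCommGroup V] [Module k V]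
    [FiniteDimensional k V] (ρ : Representation k G V) [IsIrreducible ρ] :
    ∃ X : FDRep k G, Simple X ∧ X.character = ρ.character := by
  let e := (Module.finBasis k V).equivFun
  let σ : Representation k G (Fin (Module.finrank k V) → k) :=
    e.conjRingEquiv.toMonoidHom.comp ρ
  let φ : ρ.Equiv σ := .mk e fun g ↦ by ext v : 1; simp [σ]
  have : IsIrreducible σ := isIrreducible_of_equiv φ
  exact ⟨FDRep.of σ, simple_of_isIrreducible σ, (char_iso φ).symm⟩

variable [IsAlgClosed k] [Group G] [Finite G] [NeZero (Nat.card G : k)]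

theorem eq_of_mem_center_of_forall_character_eq {z w : G}
    (hz : z ∈ Subgroup.center G) (hw : w ∈ Subgroup.center G)
    (h : ∀ X : FDRep k G, Simple X → X.character z = X.character w) : z = w := by
  suffices MonoidAlgebra.of k G z = MonoidAlgebra.of k G w from MonoidAlgebra.of_injective this
  refine eq_of_forall_isSimpleModule_smul_eq fun M _ _ _ m ↦ ?_
  let := Module.restrictScalars k k[G] M
  have : IsScalarTower k k[G] M := .restrictScalars k k[G] M
  have : FiniteDimensional k M := Module.Finite.trans k[G] M
  let ρ : Representation k G M := ofModule' M
  have : ρ.IsIrreducible := isIrreducible_ofModule' M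
  obtain ⟨X, hX, hXρ⟩ := exists_simple_character_eq ρ
  have hρ : ρ z = ρ w := eq_of_mem_center_of_character_eq ρ hz hw (hXρ ▸ h X hX)
  exact LinearMap.congr_fun hρ m

end Simple

theorem center_eq_of_invariant_characters_general {k : Type u} [Field k] [IsAlgClosed k]
    {B : Type v} [Group B] (A : Subgroup B) [A.Normal] [Finite A] [NeZero (Nat.card A : k)]
    (hZ : Subgroup.center B ≤ A) (hcyc : IsCyclic (B ⧸ A))
    (hinv : ∀ V : FDRep k A, Simple V → ∀ (b : B) (a : A)
      (h : b⁻¹ * (a : B) * b ∈ A), V.character ⟨b⁻¹ * (a : B) * b, h⟩ = V.character a) :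
    Subgroup.centralizer (A : Set B) ⊓ A = Subgroup.center B ∧
    (A ≠ ⊤ → ¬ ∀ x ∈ A, ∀ y ∈ A, x * y = y * x) := by
  have hfix : ∀ z ∈ Subgroup.center A, ∀ b : B, b⁻¹ * z * b = z := by
    intro z hz b
    have hmem : b⁻¹ * z * b ∈ A := ‹A.Normal›.conj_mem' z z.2 b
    have hconj : (MulAut.conjNormal b).symm z = ⟨b⁻¹ * z * b, hmem⟩ :=
      Subtype.ext (MulAut.conjNormal_symm_apply b z)
    have hcentral : (⟨b⁻¹ * z * b, hmem⟩ : A) ∈ Subgroup.center A :=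
      hconj ▸ MulEquivClass.apply_mem_center (MulAut.conjNormal b).symm hz
    exact congrArg Subtype.val <| eq_of_mem_center_of_forall_character_eq hcentral hz
      fun V hV ↦ hinv V hV b z hmem
  have hcenter : Subgroup.centralizer (A : Set B) ⊓ A = Subgroup.center B := by
    rw [centralizer_inf_self_eq_map_center, map_center_eq_center_of_conj_eq_self hZ hfix]
  refine ⟨hcenter, fun hA hcomm ↦ hA <| top_le_iff.mp ?_⟩
  have hAZ : A ≤ Subgroup.center B :=
    hcenter ▸ le_inf (fun x hx ↦ Subgroup.mem_centralizer_iff.mpr fun y hy ↦ hcomm y hy x hx) le_rfl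
  rwa [← center_eq_top_of_le_center_of_isCyclic_quotient hAZ]

theorem center_eq_of_invariant_characters (B : Type) [Group B] [Fintype B]
    (A : Subgroup B) [A.Normal]
    (hZ : Subgroup.center B ≤ A) (hcyc : IsCyclic (B ⧸ A))
    (hinv : ∀ V : FDRep ℂ A, CategoryTheory.Simple V → ∀ (b : B) (a : A)
      (h : b⁻¹ * (a : B) * b ∈ A), V.character ⟨b⁻¹ * (a : B) * b, h⟩ = V.character a) :
    Subgroup.centralizer (A : Set B) ⊓ A = Subgroup.center B ∧
    (A ≠ ⊤ → ¬ ∀ x ∈ A, ∀ y ∈ A, x * y = y * x) :=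
  center_eq_of_invariant_characters_general A hZ hcyc hinv
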